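/- There exists a constant C > 0 such that for every n ≥ 2, the uniformly-averaged expected convergence time of the cooling process satisfies (1/|W_{2n}|)·Σ_{w ∈ W_{2n}} E[T | w₀ = w] ≤ C·n^{5/2}·ln n. -/

import Mathlib

open scoped BigOperators ENNReal

attribute [local instance] Classical.propDecidable

namespace Cooling

/-- Words over the alphabet `{1,2}`, modeled as lists of booleans:
`true` encodes the letter `1`, `false` encodes the letter `2`. -/
abbrev Word := List Bool

/-- `w` is a configuration of length `2*n`: a word of length `2*n` with as many
occurrences of the letter `1` (`true`) as of the letter `2` (`false`). -/
def IsConfig (n : ℕ) (w : Word) : Prop :=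
  w.length = 2 * n ∧ w.count true = n

/-- The (finite) set `W_{2n}` of all configurations of length `2*n`. -/
def configSet (n : ℕ) : Finset Word :=
  ((Finset.univ : Finset (Fin (2 * n) → Bool)).image List.ofFn).filter
    (fun w => w.count true = n)

/-- The number `E(w)` of mismatches of `w`: positions `i` with `w_i = w_{i+1}`. -/
def mismatches (w : Word) : ℕ :=
  (w.zip w.tail).countP (fun p => p.1 == p.2)

/-- The number `F(w)` of flips performable on `w`: positions `i` with `w_i ≠ w_{i+1}`. -/
def flipCount (w : Word) : ℕ :=
  (w.zip w.tail).countP (fun p => p.1 != p.2)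

/-- The word `w^{(i)}` obtained from `w` by exchanging the letters at positions
`i` and `i+1` (0-indexed). -/
def flip (w : Word) (i : ℕ) : Word :=
  (w.set i (w.getD (i + 1) true)).set (i + 1) (w.getD i true)

/-- A flip is permitted at position `i` if both positions `i` and `i+1` exist and the
corresponding letters are different. -/
def CanFlip (w : Word) (i : ℕ) : Prop :=
  i + 1 < w.length ∧ w.getD i true ≠ w.getD (i + 1) true

/-- The set of positions at which a flip is allowed in the cooling process:
positions of permitted flips which do not increase the number of mismatches. -/
noncomputable def allowedFlips (w : Word) : Finset ℕ :=
  (Finset.range w.length).filter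
    (fun i => CanFlip w i ∧ mismatches (flip w i) ≤ mismatches w)

/-- One step of the cooling process: if `E(w) = 0`, stay at `w`; otherwise, perform
a flip chosen uniformly at random among the flips which do not increase the number
of mismatches. -/
noncomputable def coolStep (w : Word) : PMF Word :=
  if h : mismatches w ≠ 0 ∧ (allowedFlips w).Nonempty then
    (PMF.uniformOfFinset (allowedFlips w) h.2).map (flip w)
  else
    PMF.pure w

/-- The distribution of the cooling process at time `t`, started from `w`. -/
noncomputable def coolDist (w : Word) : ℕ → PMF Word
  | 0 => PMF.pure w
  | t + 1 => (coolDist w t).bind coolStep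

/-- The expected convergence time `E[T | w₀ = w]` of the cooling process started at `w`,
where `T = min {t ≥ 0 : E(w_t) = 0}`.  Since mismatch-free configurations are absorbing,
`E[T] = ∑_{t ≥ 0} P(T > t) = ∑_{t ≥ 0} P(E(w_t) ≠ 0)`. -/
noncomputable def expConvTime (w : Word) : ℝ≥0∞ :=
  ∑' t : ℕ, (coolDist w t).toOuterMeasure {v | mismatches v ≠ 0}

/-- The factor of `w` starting at position `s` (0-indexed) of length `l`. -/
def factor (w : Word) (s l : ℕ) : Word := (w.drop s).take l

/-- The height `|p|₁ - |p|₂` of the length-`s` prefix `p` of `w`. -/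
def height (w : Word) (s : ℕ) : ℤ :=
  ((w.take s).count true : ℤ) - (w.take s).count false

/-- The occurrence `(s, l)` is a positive Dyck factor of `w`. -/
def IsPosDyckAt (w : Word) (s l : ℕ) : Prop :=
  0 < l ∧ s + l ≤ w.length ∧
  (factor w s l).count true = (factor w s l).count false ∧
  (∀ i ≤ l, ((factor w s l).take i).count false ≤ ((factor w s l).take i).count true) ∧
  0 ≤ height w s

/-- The occurrence `(s, l)` is a negative Dyck factor of `w`. -/
def IsNegDyckAt (w : Word) (s l : ℕ) : Prop :=
  0 < l ∧ s + l ≤ w.length ∧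
  (factor w s l).count true = (factor w s l).count false ∧
  (∀ i ≤ l, ((factor w s l).take i).count true ≤ ((factor w s l).take i).count false) ∧
  height w s ≤ 0

/-- The occurrence `(s, l)` is a Dyck factor of `w` (positive or negative). -/
def IsDyckAt (w : Word) (s l : ℕ) : Prop :=
  IsPosDyckAt w s l ∨ IsNegDyckAt w s l

/-- The occurrence `(s, l)` is a maximal Dyck factor of `w`: no Dyck factor of `w`
with the same height contains it (other than itself). -/
def IsMaxDyckAt (w : Word) (s l : ℕ) : Prop :=
  IsDyckAt w s l ∧
  ∀ s' l', IsDyckAt w s' l' → height w s' = height w s → s' ≤ s → s + l ≤ s' + l' →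
    s' = s ∧ l' = l

/-- The set `DF(w)` of (occurrences of) maximal Dyck factors of `w`,
encoded as pairs (starting position, length). -/
noncomputable def DF (w : Word) : Finset (ℕ × ℕ) :=
  ((Finset.range (w.length + 1)) ×ˢ (Finset.range (w.length + 1))).filter
    (fun sl => IsMaxDyckAt w sl.1 sl.2)

/-- The variant `φ_α(w) = ∑_{v ∈ DF(w)} (1 + |v|₁)^α`. -/
noncomputable def phi (α : ℝ) (w : Word) : ℝ :=
  ∑ sl ∈ DF w, (1 + ((factor w sl.1 sl.2).count true : ℝ)) ^ α

/-- The volume `V(w) = (1/2) ∑_{k=1}^{|w|} |h_{k-1}(w) + h_k(w)|`: the area between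
the broken-line representation of `w` and the horizontal axis. -/
noncomputable def volume (w : Word) : ℝ :=
  (1 / 2) * ∑ k ∈ Finset.range w.length, |((height w k + height w (k + 1) : ℤ) : ℝ)|
/-! ### Intervals contained in a finite set -/

/-- The pairs `(x, y)` with `x ≤ y` such that the integer interval `[x, y]` is contained in `S`. -/
def intervals (S : Finset ℕ) : Finset (ℕ × ℕ) :=
  (S ×ˢ S).filter (fun p => p.1 ≤ p.2 ∧ Finset.Icc p.1 p.2 ⊆ S)

lemma mem_intervals {S : Finset ℕ} {p : ℕ × ℕ} :
    p ∈ intervals S ↔ p.1 ≤ p.2 ∧ Finset.Icc p.1 p.2 ⊆ S := by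
  simp only [intervals, Finset.mem_filter, Finset.mem_product]
  constructor
  · exact fun h => h.2
  · intro h
    exact ⟨⟨h.2 (by simp [h.1]), h.2 (by simp [h.1])⟩, h⟩

/-- The number of intervals contained in `S` that meet `{i, i + 1}`. -/
def meeting (S : Finset ℕ) (i : ℕ) : ℕ :=
  ((intervals S).filter (fun p => p.1 ≤ i + 1 ∧ i ≤ p.2)).card

lemma card_intervals_sdiff (S : Finset ℕ) (i : ℕ) :
    (intervals (S \ {i, i + 1})).card + meeting S i = (intervals S).card := by
  rw [meeting, ← Finset.card_filter_add_card_filter_not (s := intervals S)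
    (fun p => p.1 ≤ i + 1 ∧ i ≤ p.2), add_comm]
  congr 2
  ext ⟨x, y⟩
  simp only [mem_intervals, Finset.mem_filter, Finset.subset_iff, Finset.mem_Icc,
    Finset.mem_sdiff, Finset.mem_insert, Finset.mem_singleton]
  constructor
  · rintro ⟨hxy, h⟩
    refine ⟨⟨hxy, fun z hz => (h hz).1⟩, fun hc => ?_⟩
    by_cases hx : x ≤ i
    · exact (h (x := i) ⟨hx, hc.2⟩).2 (Or.inl rfl)
    · exact (h (x := x) ⟨le_rfl, hxy⟩).2 (Or.inr (by omega))
  · rintro ⟨⟨hxy, h⟩, hn⟩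
    exact ⟨hxy, fun z hz => ⟨h hz, by omega⟩⟩

/-- The right endpoints of the intervals contained in `S` that start at `i + 1`. -/
def reach (S : Finset ℕ) (i : ℕ) : Finset ℕ :=
  S.filter (fun y => i + 1 ≤ y ∧ Finset.Icc (i + 1) y ⊆ S)

lemma meeting_le {S : Finset ℕ} {i : ℕ} (hi : ∀ x ∈ S, x + 1 ≠ i) :
    meeting S i ≤ 2 * (reach S i).card + 1 := by
  have hsub : (intervals S).filter (fun p => p.1 ≤ i + 1 ∧ i ≤ p.2) ⊆
      ({i + 1} ×ˢ reach S i) ∪ ({i} ×ˢ insert i (reach S i)) := by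
    rintro ⟨x, y⟩ hp
    simp only [Finset.mem_filter, mem_intervals, Finset.subset_iff, Finset.mem_Icc] at hp
    obtain ⟨⟨hxy, h⟩, hx, hy⟩ := hp
    have hxi : i ≤ x := by
      by_contra hlt
      exact hi (i - 1) (h (by omega)) (by omega)
    have hyS : y ∈ S := h ⟨hxy, le_rfl⟩
    simp only [reach, Finset.mem_union, Finset.mem_product, Finset.mem_singleton,
      Finset.mem_insert, Finset.mem_filter, Finset.subset_iff, Finset.mem_Icc]
    have hS : ∀ ⦃z⦄, i + 1 ≤ z ∧ z ≤ y → z ∈ S := fun z hz => h (by omega)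
    rcases Nat.lt_or_ge i x with hlt | hge
    · exact Or.inl ⟨by omega, hyS, by omega, hS⟩
    · refine Or.inr ⟨by omega, ?_⟩
      rcases Nat.lt_or_ge i y with hlt' | hge'
      · exact Or.inr ⟨hyS, by omega, hS⟩
      · exact Or.inl (by omega)
  have h1 := Finset.card_le_card hsub
  have h2 := Finset.card_union_le ({i + 1} ×ˢ reach S i) ({i} ×ˢ insert i (reach S i))
  have h3 := Finset.card_insert_le i (reach S i)
  simp only [Finset.card_product, Finset.card_singleton, one_mul] at h2
  unfold meeting
  omega

lemma le_meeting {S T : Finset ℕ} {v p : ℕ} (hvp : v < p) (hTS : T ⊆ S)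
    (hS : Finset.Icc v p ⊆ S) : 2 * (reach T p).card + 3 ≤ meeting S v := by
  have hsub : ({v + 1} ×ˢ insert (v + 1) (reach T p)) ∪
      ({v} ×ˢ insert v (insert (v + 1) (reach T p))) ⊆
      (intervals S).filter (fun q => q.1 ≤ v + 1 ∧ v ≤ q.2) := by
    have key : ∀ y, y = v ∨ y = v + 1 ∨ y ∈ reach T p → v ≤ y ∧ Finset.Icc v y ⊆ S := by
      intro y hy
      simp only [reach, Finset.mem_filter, Finset.subset_iff, Finset.mem_Icc] at hy
      simp only [Finset.subset_iff, Finset.mem_Icc] at hS ⊢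
      refine ⟨by omega, fun z hz => ?_⟩
      rcases Nat.lt_or_ge p z with hlt | hge
      · rcases hy with hy | hy | hy
        · omega
        · omega
        · exact hTS (hy.2.2 (by omega))
      · exact hS ⟨hz.1, hge⟩
    rintro ⟨x, y⟩ hq
    simp only [Finset.mem_union, Finset.mem_product, Finset.mem_singleton,
      Finset.mem_insert] at hq
    have hr : ∀ y ∈ reach T p, v + 1 ≤ y := by
      intro y hy
      simp only [reach, Finset.mem_filter] at hy
      omega
    simp only [Finset.mem_filter, mem_intervals]
    rcases hq with ⟨rfl, hy⟩ | ⟨rfl, hy⟩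
    · have hy1 : v + 1 ≤ y := by
        rcases hy with hy | hy
        · omega
        · exact hr y hy
      exact ⟨⟨hy1, (Finset.Icc_subset_Icc_left (by omega)).trans (key y (Or.inr hy)).2⟩,
        le_rfl, by omega⟩
    · obtain ⟨h1, h2⟩ := key y hy
      exact ⟨⟨h1, h2⟩, by omega, h1⟩
  have h1 := Finset.card_le_card hsub
  have hn : ∀ y ≤ v + 1, y ∉ reach T p := by
    intro y hy hy'
    simp only [reach, Finset.mem_filter] at hy'
    omega
  rw [Finset.card_union_of_disjoint, Finset.card_product, Finset.card_product,
    Finset.card_insert_of_notMem (hn _ le_rfl), Finset.card_insert_of_notMem,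
    Finset.card_insert_of_notMem (hn _ le_rfl)] at h1
  · simp only [Finset.card_singleton, one_mul] at h1
    unfold meeting
    omega
  · simp only [Finset.mem_insert, not_or]
    exact ⟨by omega, hn _ (by omega)⟩
  · rw [Finset.disjoint_left]
    rintro ⟨x, y⟩ h h'
    simp only [Finset.mem_product, Finset.mem_singleton] at h h'
    omega

/-! ### Lattice paths and the potential -/

/-- The reversal of a lattice path of length `M`. -/
def rev (M : ℕ) (h : ℕ → ℤ) : ℕ → ℤ := fun i => h (M - i)

/-- `h` is a `±1` lattice path of length `M` from `0` to `0`. -/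
def IsBridge (M : ℕ) (h : ℕ → ℤ) : Prop :=
  h 0 = 0 ∧ h M = 0 ∧ ∀ i < M, h (i + 1) = h i + 1 ∨ h (i + 1) = h i - 1

/-- The path obtained by reflecting the vertex `i + 1` through its two neighbours. -/
def reflectAt (h : ℕ → ℤ) (i : ℕ) : ℕ → ℤ :=
  Function.update h (i + 1) (h i + h (i + 2) - h (i + 1))

/-- The steps of the path having an endpoint of height at least `c`. -/
noncomputable def levelSet (M : ℕ) (h : ℕ → ℤ) (c : ℤ) : Finset ℕ :=
  (Finset.range M).filter (fun x => c ≤ max (h x) (h (x + 1)))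

/-- The one-sided potential: `∑ ℓ (2 M - (ℓ + 1) / 2)` over all levels `c ≥ 1` and all connected
components of the level set at `c`, where `ℓ` is the length of the component. -/
noncomputable def pot (M : ℕ) (h : ℕ → ℤ) : ℤ :=
  ∑ c ∈ Finset.Icc (1 : ℤ) (M + 1),
    (2 * M * (levelSet M h c).card - (intervals (levelSet M h c)).card)

/-- The vertex `i + 1` is a local maximum. -/
def IsPeak (h : ℕ → ℤ) (i : ℕ) : Prop := h i = h (i + 1) - 1 ∧ h (i + 2) = h (i + 1) - 1

/-- The vertex `i + 1` is a local minimum. -/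
def IsValley (h : ℕ → ℤ) (i : ℕ) : Prop := h i = h (i + 1) + 1 ∧ h (i + 2) = h (i + 1) + 1

/-- The monotone run ending at the vertex `i + 1` has length at least two. -/
def LongL (h : ℕ → ℤ) (i : ℕ) : Prop := 1 ≤ i ∧ h (i - 1) ≠ h (i + 1)

/-- The monotone run starting at the vertex `i + 1` has length at least two. -/
def LongR (M : ℕ) (h : ℕ → ℤ) (i : ℕ) : Prop := i + 2 < M ∧ h (i + 1) ≠ h (i + 3)

/-- The change of the one-sided potential when reflecting at `i`. -/
noncomputable def potDiff (M : ℕ) (h : ℕ → ℤ) (i : ℕ) : ℤ := pot M (reflectAt h i) - pot M h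

lemma reflectAt_apply (h : ℕ → ℤ) (i j : ℕ) :
    reflectAt h i j = if j = i + 1 then h i + h (i + 2) - h (i + 1) else h j := by
  simp [reflectAt, Function.update_apply]

lemma reflectAt_reflectAt (h : ℕ → ℤ) (i : ℕ) : reflectAt (reflectAt h i) i = h := by
  funext j
  rcases eq_or_ne j (i + 1) with rfl | hj
  · simp [reflectAt_apply]
  · simp [reflectAt_apply, hj]

lemma IsBridge.le {M : ℕ} {h : ℕ → ℤ} (hb : IsBridge M h) {i : ℕ} (hi : i ≤ M) : h i ≤ i := by
  induction i with
  | zero => simp [hb.1]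
  | succ k ih =>
    have := ih (by omega)
    have := hb.2.2 k (by omega)
    push_cast
    omega

lemma IsBridge.neg {M : ℕ} {h : ℕ → ℤ} (hb : IsBridge M h) : IsBridge M (-h) := by
  refine ⟨by simp [hb.1], by simp [hb.2.1], fun i hi => ?_⟩
  have := hb.2.2 i hi
  simp only [Pi.neg_apply]
  omega

lemma IsBridge.rev {M : ℕ} {h : ℕ → ℤ} (hb : IsBridge M h) : IsBridge M (rev M h) := by
  refine ⟨by simp [Cooling.rev, hb.2.1], by simp [Cooling.rev, hb.1], fun i hi => ?_⟩
  have := hb.2.2 (M - (i + 1)) (by omega)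
  simp only [Cooling.rev]
  rw [show M - i = M - (i + 1) + 1 by omega]
  omega

lemma levelSet_reflectAt_peak {M : ℕ} {h : ℕ → ℤ} {i : ℕ} (hi : i + 1 < M) (hp : IsPeak h i)
    (c : ℤ) : levelSet M (reflectAt h i) c =
      if c = h (i + 1) then levelSet M h c \ {i, i + 1} else levelSet M h c := by
  obtain ⟨h1, h2⟩ := hp
  ext x
  have key : c ≤ max (reflectAt h i x) (reflectAt h i (x + 1)) ↔
      c ≤ max (h x) (h (x + 1)) ∧ (c = h (i + 1) → x ≠ i ∧ x ≠ i + 1) := by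
    simp only [reflectAt_apply, le_max_iff]
    by_cases hx : x = i
    · subst hx
      simp
      omega
    by_cases hx' : x = i + 1
    · subst hx'
      simp [h2]
      omega
    simp [hx, hx']
  split_ifs with hc
  · simp only [levelSet, Finset.mem_filter, Finset.mem_sdiff, Finset.mem_insert,
      Finset.mem_singleton, key]
    tauto
  · simp only [levelSet, Finset.mem_filter, key, hc]
    tauto

lemma potDiff_peak {M : ℕ} {h : ℕ → ℤ} {i : ℕ} (hi : i + 1 < M) (hp : IsPeak h i)
    (h1 : 1 ≤ h (i + 1)) (hM : h (i + 1) ≤ M + 1) :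
    potDiff M h i = meeting (levelSet M h (h (i + 1))) i - 4 * M := by
  have hmem : h (i + 1) ∈ Finset.Icc (1 : ℤ) (M + 1) := Finset.mem_Icc.2 ⟨h1, hM⟩
  unfold potDiff pot
  rw [← Finset.sum_sub_distrib, Finset.sum_eq_single_of_mem _ hmem]
  · rw [levelSet_reflectAt_peak hi hp, if_pos rfl]
    have e1 := card_intervals_sdiff (levelSet M h (h (i + 1))) i
    have hsub : ({i, i + 1} : Finset ℕ) ⊆ levelSet M h (h (i + 1)) := by
      intro x hx
      simp only [Finset.mem_insert, Finset.mem_singleton] at hx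
      simp only [levelSet, Finset.mem_filter, Finset.mem_range, le_max_iff]
      rcases hx with rfl | rfl
      · exact ⟨by omega, Or.inr le_rfl⟩
      · exact ⟨by omega, Or.inl le_rfl⟩
    have e2 := Finset.card_sdiff_add_card_eq_card hsub
    rw [Finset.card_pair (by omega)] at e2
    have e1' : ((intervals (levelSet M h (h (i + 1)) \ {i, i + 1})).card : ℤ) +
      meeting (levelSet M h (h (i + 1))) i = (intervals (levelSet M h (h (i + 1)))).card := by
      exact_mod_cast e1
    have e2' : ((levelSet M h (h (i + 1)) \ {i, i + 1}).card : ℤ) + 2 =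
      (levelSet M h (h (i + 1))).card := by exact_mod_cast e2
    rw [← e1', ← e2']
    ring
  · intro c _ hc
    rw [levelSet_reflectAt_peak hi hp, if_neg hc, sub_self]

lemma potDiff_peak_eq_zero {M : ℕ} {h : ℕ → ℤ} {i : ℕ} (hi : i + 1 < M) (hp : IsPeak h i)
    (h1 : h (i + 1) < 1) : potDiff M h i = 0 := by
  unfold potDiff pot
  rw [← Finset.sum_sub_distrib]
  refine Finset.sum_eq_zero fun c hc => ?_
  rw [levelSet_reflectAt_peak hi hp, if_neg, sub_self]
  have := (Finset.mem_Icc.1 hc).1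
  omega

lemma IsValley.isPeak_reflectAt {h : ℕ → ℤ} {i : ℕ} (hv : IsValley h i) :
    IsPeak (reflectAt h i) i := by
  obtain ⟨h1, h2⟩ := hv
  simp only [IsPeak, reflectAt_apply]
  simp
  omega

lemma IsValley.reflectAt_apply {h : ℕ → ℤ} {i : ℕ} (hv : IsValley h i) :
    reflectAt h i (i + 1) = h (i + 1) + 2 := by
  obtain ⟨h1, h2⟩ := hv
  simp only [Cooling.reflectAt_apply, if_true]
  omega

lemma potDiff_reflectAt (M : ℕ) (h : ℕ → ℤ) (i : ℕ) :
    potDiff M h i = - potDiff M (reflectAt h i) i := by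
  simp [potDiff, reflectAt_reflectAt]

lemma potDiff_valley {M : ℕ} {h : ℕ → ℤ} {i : ℕ} (hi : i + 1 < M) (hv : IsValley h i)
    (h1 : -1 ≤ h (i + 1)) (hM : h (i + 1) + 1 ≤ M) :
    potDiff M h i = 4 * M - meeting (levelSet M (reflectAt h i) (h (i + 1) + 2)) i := by
  rw [potDiff_reflectAt, potDiff_peak hi hv.isPeak_reflectAt (by rw [hv.reflectAt_apply]; omega)
    (by rw [hv.reflectAt_apply]; omega), hv.reflectAt_apply]
  ring

lemma potDiff_valley_eq_zero {M : ℕ} {h : ℕ → ℤ} {i : ℕ} (hi : i + 1 < M) (hv : IsValley h i)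
    (h1 : h (i + 1) < -1) : potDiff M h i = 0 := by
  rw [potDiff_reflectAt, potDiff_peak_eq_zero hi hv.isPeak_reflectAt
    (by rw [hv.reflectAt_apply]; omega), neg_zero]

lemma card_reach_le {M : ℕ} {h : ℕ → ℤ} {c : ℤ} {i : ℕ} : (reach (levelSet M h c) i).card ≤ M := by
  refine (Finset.card_le_card ((Finset.filter_subset _ _).trans (Finset.filter_subset _ _))).trans ?_
  simp

lemma meeting_levelSet_le {M : ℕ} {h : ℕ → ℤ} {i : ℕ} (hb : IsBridge M h) (hi : i + 1 < M)
    (hp : IsPeak h i) (hl : LongL h i) :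
    meeting (levelSet M h (h (i + 1))) i ≤
      2 * (reach (levelSet M h (h (i + 1))) i).card + 1 := by
  refine meeting_le fun x hx hxi => ?_
  subst hxi
  obtain ⟨h1, h2⟩ := hp
  have h3 := hl.2
  have h4 := hb.2.2 x (by omega)
  simp only [levelSet, Finset.mem_filter, le_max_iff] at hx
  simp only [Nat.add_sub_cancel] at h3
  omega

lemma potDiff_peak_longL_le {M : ℕ} {h : ℕ → ℤ} {i : ℕ} (hb : IsBridge M h) (hi : i + 1 < M)
    (hp : IsPeak h i) (hl : LongL h i) (h1 : 1 ≤ h (i + 1)) : potDiff M h i + 1 ≤ 0 := by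
  have hle := hb.le (i := i + 1) (by omega)
  rw [potDiff_peak hi hp h1 (by push_cast at hle; omega)]
  have h2 := meeting_levelSet_le hb hi hp hl
  have h3 := card_reach_le (M := M) (h := h) (c := h (i + 1)) (i := i)
  omega

/-- A valley followed by a long rise can be matched with the peak ending this rise so that the
two potential differences sum up to at most `-2`. -/
lemma exists_peak_matching {M : ℕ} {h : ℕ → ℤ} (hb : IsBridge M h) {v : ℕ}
    (hv : IsValley h v) (hl : LongR M h v) (h1 : -1 ≤ h (v + 1)) :
    ∃ p, v + 2 ≤ p ∧ p + 1 < M ∧ (∀ q, v ≤ q → q < p → h (q + 2) = h (q + 1) + 1) ∧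
      IsPeak h p ∧ LongL h p ∧ 1 ≤ h (p + 1) ∧ potDiff M h v + potDiff M h p ≤ -2 := by
  obtain ⟨hv3, hne⟩ := hl
  have hstep := hb.2.2 (v + 2) (by omega)
  have hex : ∃ p, v ≤ p ∧ ¬ (p + 1 < M ∧ h (p + 2) = h (p + 1) + 1) := ⟨v + M, by omega, by omega⟩
  obtain ⟨hvp, hlast⟩ := Nat.find_spec hex
  have hmin : ∀ q, v ≤ q → q < Nat.find hex → q + 1 < M ∧ h (q + 2) = h (q + 1) + 1 := by
    intro q hq hqp
    have := Nat.find_min hex hqp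
    tauto
  generalize Nat.find hex = p at *
  have hv2 : h (v + 2) = h (v + 1) + 1 := hv.2
  have hv3' : h (v + 3) = h (v + 2) + 1 := by
    rcases hstep with h' | h'
    · exact h'
    · exact absurd (by rw [show v + 3 = v + 2 + 1 by ring, h', hv2]; ring) hne
  have hp2 : v + 2 ≤ p := by
    by_contra hlt
    apply hlast
    rcases (show p = v ∨ p = v + 1 by omega) with rfl | rfl
    · exact ⟨by omega, hv2⟩
    · exact ⟨by omega, hv3'⟩
  have hheight : ∀ r, v + r ≤ p → h (v + r + 1) = h (v + 1) + r := by
    intro r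
    induction r with
    | zero => simp
    | succ k ih =>
      intro hk
      have e1 := ih (by omega)
      have e2 := (hmin (v + k) (by omega) (by omega)).2
      rw [show v + (k + 1) + 1 = v + k + 2 by ring, e2, e1]
      push_cast
      ring
  have hpM : p < M := by
    have := (hmin (p - 1) (by omega) (by omega)).1
    omega
  obtain ⟨r, rfl⟩ : ∃ r, p = v + r := ⟨p - v, by omega⟩
  have hr := hheight r le_rfl
  have hpM' : v + r + 1 < M := by
    by_contra hge
    have e : v + r + 1 = M := by omega
    rw [e, hb.2.1] at hr
    omega
  have hdown : h (v + r + 2) = h (v + r + 1) - 1 := by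
    rcases hb.2.2 (v + r + 1) hpM' with h' | h'
    · exact absurd ⟨hpM', h'⟩ hlast
    · exact h'
  have hup : h (v + r) = h (v + r + 1) - 1 := by
    have := (hmin (v + r - 1) (by omega) (by omega)).2
    rw [show v + r - 1 + 2 = v + r + 1 by omega, show v + r - 1 + 1 = v + r by omega] at this
    omega
  have hup2 : h (v + r - 1) = h (v + r + 1) - 2 := by
    have := (hmin (v + r - 2) (by omega) (by omega)).2
    rw [show v + r - 2 + 2 = v + r by omega, show v + r - 2 + 1 = v + r - 1 by omega] at this
    omega
  have hpeak : IsPeak h (v + r) := ⟨hup, hdown⟩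
  have hlong : LongL h (v + r) := ⟨by omega, by omega⟩
  have hone : 1 ≤ h (v + r + 1) := by omega
  refine ⟨v + r, hp2, hpM', fun q hq hqp => (hmin q hq hqp).2, hpeak, hlong, hone, ?_⟩
  have hle := hb.le (i := v + r + 1) (by omega)
  have hle' := hb.le (i := v + 1) (by omega)
  push_cast at hle hle'
  rw [potDiff_peak hpM' hpeak hone (by omega), potDiff_valley (by omega) hv h1 (by omega)]
  have e1 := meeting_levelSet_le hb hpM' hpeak hlong
  have e2 : 2 * (reach (levelSet M h (h (v + r + 1))) (v + r)).card + 3 ≤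
      meeting (levelSet M (reflectAt h v) (h (v + 1) + 2)) v := by
    refine le_meeting (by omega) ?_ ?_
    · intro x hx
      simp only [levelSet, Finset.mem_filter, le_max_iff, Finset.mem_range, reflectAt_apply]
        at hx ⊢
      refine ⟨hx.1, ?_⟩
      have := hv.1
      split_ifs <;> omega
    · intro x hx
      rw [Finset.mem_Icc] at hx
      simp only [levelSet, Finset.mem_filter, le_max_iff, Finset.mem_range, reflectAt_apply]
      refine ⟨by omega, ?_⟩
      obtain ⟨s, rfl⟩ : ∃ s, x = v + s := ⟨x - v, by omega⟩
      have e := hheight s hx.2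
      have := hv.1
      rcases (show s = 0 ∨ s = 1 ∨ 2 ≤ s by omega) with rfl | rfl | hs
      · simp
        omega
      · simp
        omega
      · right
        rw [if_neg (by omega), e]
        omega
  omega

/-! ### Reversal symmetry -/

lemma mem_levelSet {M : ℕ} {h : ℕ → ℤ} {c : ℤ} {x : ℕ} :
    x ∈ levelSet M h c ↔ x < M ∧ c ≤ max (h x) (h (x + 1)) := by
  simp only [levelSet, Finset.mem_filter, Finset.mem_range]

lemma mem_levelSet_rev {M : ℕ} {h : ℕ → ℤ} {c : ℤ} {x : ℕ} :
    x ∈ levelSet M (rev M h) c ↔ x < M ∧ M - 1 - x ∈ levelSet M h c := by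
  rw [mem_levelSet, mem_levelSet]
  refine and_congr_right fun hx => ?_
  rw [rev, rev, show M - x = M - 1 - x + 1 by omega, show M - (x + 1) = M - 1 - x by omega,
    max_comm]
  exact ⟨fun hc => ⟨by omega, hc⟩, fun hc => hc.2⟩

lemma mem_levelSet_lt {M : ℕ} {h : ℕ → ℤ} {c : ℤ} {x : ℕ} (hx : x ∈ levelSet M h c) : x < M :=
  Finset.mem_range.1 (Finset.mem_filter.1 hx).1

lemma pot_rev (M : ℕ) (h : ℕ → ℤ) : pot M (rev M h) = pot M h := by
  unfold pot
  refine Finset.sum_congr rfl fun c _ => ?_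
  have hback : ∀ x ∈ levelSet M h c, M - 1 - x ∈ levelSet M (rev M h) c := by
    intro x hx
    have := mem_levelSet_lt hx
    rw [mem_levelSet_rev, show M - 1 - (M - 1 - x) = x by omega]
    exact ⟨by omega, hx⟩
  have e1 : (levelSet M (rev M h) c).card = (levelSet M h c).card := by
    refine Finset.card_nbij' (fun x => M - 1 - x) (fun x => M - 1 - x) ?_ ?_ ?_ ?_
    · exact fun x hx => (mem_levelSet_rev.1 hx).2
    · exact hback
    · intro x hx
      have := mem_levelSet_lt hx
      simp only
      omega
    · intro x hx
      have := mem_levelSet_lt hx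
      simp only
      omega
  have e2 : (intervals (levelSet M (rev M h) c)).card = (intervals (levelSet M h c)).card := by
    have hlt : ∀ g : ℕ → ℤ, ∀ p ∈ intervals (levelSet M g c), p.1 ≤ p.2 ∧ p.2 < M := by
      intro g p hp
      rw [mem_intervals] at hp
      exact ⟨hp.1, mem_levelSet_lt (hp.2 (Finset.mem_Icc.2 ⟨hp.1, le_rfl⟩))⟩
    refine Finset.card_nbij' (fun p => (M - 1 - p.2, M - 1 - p.1))
      (fun p => (M - 1 - p.2, M - 1 - p.1)) ?_ ?_ ?_ ?_
    · intro p hp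
      have hl := hlt _ p hp
      rw [Finset.mem_coe, mem_intervals] at hp ⊢
      refine ⟨by simp only; omega, fun z hz => ?_⟩
      simp only [Finset.mem_Icc] at hz
      have hm := mem_levelSet_rev.1 (hp.2 (Finset.mem_Icc.2
        ⟨(by omega : p.1 ≤ M - 1 - z), (by omega : M - 1 - z ≤ p.2)⟩))
      rw [show M - 1 - (M - 1 - z) = z by omega] at hm
      exact hm.2
    · intro p hp
      have hl := hlt _ p hp
      rw [Finset.mem_coe, mem_intervals] at hp ⊢
      refine ⟨by simp only; omega, fun z hz => ?_⟩
      simp only [Finset.mem_Icc] at hz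
      exact mem_levelSet_rev.2 ⟨by omega, hp.2 (Finset.mem_Icc.2 ⟨by omega, by omega⟩)⟩
    · rintro ⟨x, y⟩ hp
      have hl := hlt _ _ hp
      simp only at hl
      simp only [Prod.mk.injEq]
      omega
    · rintro ⟨x, y⟩ hp
      have hl := hlt _ _ hp
      simp only at hl
      simp only [Prod.mk.injEq]
      omega
  rw [e1, e2]

lemma reflectAt_rev {M : ℕ} {h : ℕ → ℤ} {i : ℕ} (hi : i + 1 < M) :
    reflectAt (rev M h) (M - 2 - i) = rev M (reflectAt h i) := by
  funext j
  simp only [reflectAt_apply, rev]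
  rw [show M - (M - 2 - i) = i + 2 by omega, show M - (M - 2 - i + 2) = i by omega,
    show M - (M - 2 - i + 1) = i + 1 by omega]
  by_cases hj : j = M - 2 - i + 1
  · rw [if_pos hj, if_pos (by omega)]
    ring
  · rw [if_neg hj, if_neg (by omega)]

lemma potDiff_rev {M : ℕ} {h : ℕ → ℤ} {i : ℕ} (hi : i + 1 < M) :
    potDiff M (rev M h) (M - 2 - i) = potDiff M h i := by
  rw [potDiff, reflectAt_rev hi, pot_rev, pot_rev, potDiff]

lemma isPeak_rev {M : ℕ} {h : ℕ → ℤ} {i : ℕ} (hi : i + 1 < M) :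
    IsPeak (rev M h) (M - 2 - i) ↔ IsPeak h i := by
  simp only [IsPeak, rev]
  rw [show M - (M - 2 - i) = i + 2 by omega, show M - (M - 2 - i + 2) = i by omega,
    show M - (M - 2 - i + 1) = i + 1 by omega]
  exact and_comm

lemma isValley_rev {M : ℕ} {h : ℕ → ℤ} {i : ℕ} (hi : i + 1 < M) :
    IsValley (rev M h) (M - 2 - i) ↔ IsValley h i := by
  simp only [IsValley, rev]
  rw [show M - (M - 2 - i) = i + 2 by omega, show M - (M - 2 - i + 2) = i by omega,
    show M - (M - 2 - i + 1) = i + 1 by omega]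
  exact and_comm

lemma longL_rev {M : ℕ} {h : ℕ → ℤ} {i : ℕ} (hi : i + 1 < M) :
    LongL (rev M h) (M - 2 - i) ↔ LongR M h i := by
  simp only [LongL, LongR, rev]
  by_cases hi' : i + 2 < M
  · rw [show M - (M - 2 - i - 1) = i + 3 by omega, show M - (M - 2 - i + 1) = i + 1 by omega,
      ne_comm]
    exact and_congr_left' (by omega)
  · exact ⟨fun h => by omega, fun h => by omega⟩

lemma longR_rev {M : ℕ} {h : ℕ → ℤ} {i : ℕ} (hi : i + 1 < M) :
    LongR M (rev M h) (M - 2 - i) ↔ LongL h i := by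
  simp only [LongL, LongR, rev]
  rw [show M - (M - 2 - i + 3) = i - 1 by omega, show M - (M - 2 - i + 1) = i + 1 by omega,
    ne_comm]
  exact and_congr_left' (by omega)

/-! ### Drift of the one-sided potential -/

/-- Reflections moving the end of a long rise (at heights where the potential changes). -/
def RiseMove (M : ℕ) (h : ℕ → ℤ) (i : ℕ) : Prop :=
  (IsValley h i ∧ LongR M h i ∧ ¬ LongL h i ∧ -1 ≤ h (i + 1)) ∨
    (IsPeak h i ∧ LongL h i ∧ 1 ≤ h (i + 1))

/-- Reflections moving the end of a long descent (at heights where the potential changes). -/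
def DescentMove (M : ℕ) (h : ℕ → ℤ) (i : ℕ) : Prop :=
  (IsValley h i ∧ LongL h i ∧ ¬ LongR M h i ∧ -1 ≤ h (i + 1)) ∨
    (IsPeak h i ∧ LongR M h i ∧ 1 ≤ h (i + 1))

lemma sum_riseMove_le {M : ℕ} {h : ℕ → ℤ} (hb : IsBridge M h) :
    ∑ i ∈ Finset.range (M - 1), (if RiseMove M h i then potDiff M h i + 1 else 0) ≤ 0 := by
  set V := (Finset.range (M - 1)).filter
    (fun i => IsValley h i ∧ LongR M h i ∧ ¬ LongL h i ∧ -1 ≤ h (i + 1)) with hV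
  set P := (Finset.range (M - 1)).filter
    (fun i => IsPeak h i ∧ LongL h i ∧ 1 ≤ h (i + 1)) with hP
  have hdisj : Disjoint V P := by
    rw [Finset.disjoint_left]
    intro i hi hi'
    have h1 := (Finset.mem_filter.1 hi).2.1.1
    have h2 := (Finset.mem_filter.1 hi').2.1.1
    omega
  rw [← Finset.sum_filter]
  have hunion : (Finset.range (M - 1)).filter (RiseMove M h) = V ∪ P := by
    ext i
    simp only [hV, hP, RiseMove, Finset.mem_union, Finset.mem_filter]
    tauto
  rw [hunion, Finset.sum_union hdisj]
  have hex : ∀ v ∈ V, ∃ p, v + 2 ≤ p ∧ p + 1 < M ∧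
      (∀ q, v ≤ q → q < p → h (q + 2) = h (q + 1) + 1) ∧
      IsPeak h p ∧ LongL h p ∧ 1 ≤ h (p + 1) ∧ potDiff M h v + potDiff M h p ≤ -2 := by
    intro v hv
    obtain ⟨h1, h2, _, h3⟩ := (Finset.mem_filter.1 hv).2
    exact exists_peak_matching hb h1 h2 h3
  choose! p hp using hex
  have hinj : Set.InjOn p V := by
    have aux : ∀ a ∈ V, ∀ b ∈ V, p a = p b → ¬ a < b := by
      intro a ha b hb' hab hlt
      have hbv := (Finset.mem_filter.1 hb').2.1.1
      have h1 := (hp a ha).2.2.1 (b - 1) (by omega) (by have := (hp b hb').1; omega)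
      rw [show b - 1 + 2 = b + 1 by omega, show b - 1 + 1 = b by omega] at h1
      omega
    intro a ha b hb' hab
    have h1 := aux a ha b hb' hab
    have h2 := aux b hb' a ha hab.symm
    omega
  have himage : V.image p ⊆ P := by
    intro q hq
    obtain ⟨v, hv, rfl⟩ := Finset.mem_image.1 hq
    obtain ⟨_, h1, _, h2, h3, h4, _⟩ := hp v hv
    exact Finset.mem_filter.2 ⟨Finset.mem_range.2 (by omega), h2, h3, h4⟩
  have hneg : ∀ q ∈ P, potDiff M h q + 1 ≤ 0 := by
    intro q hq
    obtain ⟨h0, h1, h2, h3⟩ := Finset.mem_filter.1 hq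
    have := Finset.mem_range.1 h0
    exact potDiff_peak_longL_le hb (by omega) h1 h2 h3
  have e1 : ∑ v ∈ V, (potDiff M h v + 1) ≤ ∑ v ∈ V, -(potDiff M h (p v) + 1) := by
    refine Finset.sum_le_sum fun v hv => ?_
    have := (hp v hv).2.2.2.2.2.2
    omega
  have e2 : ∑ v ∈ V, -(potDiff M h (p v) + 1) = ∑ q ∈ V.image p, -(potDiff M h q + 1) :=
    (Finset.sum_image (f := fun q => -(potDiff M h q + 1)) hinj).symm
  have e3 : ∑ q ∈ V.image p, -(potDiff M h q + 1) ≤ ∑ q ∈ P, -(potDiff M h q + 1) :=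
    Finset.sum_le_sum_of_subset_of_nonneg himage fun q hq _ => by
      have := hneg q hq
      omega
  have e4 : ∑ q ∈ P, -(potDiff M h q + 1) = -∑ q ∈ P, (potDiff M h q + 1) :=
    Finset.sum_neg_distrib _
  linarith

lemma riseMove_rev {M : ℕ} {h : ℕ → ℤ} {i : ℕ} (hi : i + 1 < M) :
    RiseMove M (rev M h) (M - 2 - i) ↔ DescentMove M h i := by
  unfold RiseMove DescentMove
  rw [isPeak_rev hi, isValley_rev hi, longL_rev hi, longR_rev hi,
    show rev M h (M - 2 - i + 1) = h (i + 1) from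
      congrArg h (show M - (M - 2 - i + 1) = i + 1 by omega)]

lemma sum_descentMove_le {M : ℕ} {h : ℕ → ℤ} (hb : IsBridge M h) :
    ∑ i ∈ Finset.range (M - 1), (if DescentMove M h i then potDiff M h i + 1 else 0) ≤ 0 := by
  have key := sum_riseMove_le hb.rev
  rw [← Finset.sum_range_reflect] at key
  refine le_trans (le_of_eq (Finset.sum_congr rfl fun i hi => ?_)) key
  have := Finset.mem_range.1 hi
  rw [show M - 1 - 1 - i = M - 2 - i by omega, potDiff_rev (by omega)]
  simp only [riseMove_rev (show i + 1 < M by omega)]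

/-- The reflections which change `pot`. -/
def Relevant (h : ℕ → ℤ) (i : ℕ) : Prop :=
  (IsPeak h i ∧ 1 ≤ h (i + 1)) ∨ (IsValley h i ∧ -1 ≤ h (i + 1))

/-- The reflections performed by the cooling process. -/
def Active (M : ℕ) (h : ℕ → ℤ) (i : ℕ) : Prop :=
  (IsPeak h i ∨ IsValley h i) ∧ (LongL h i ∨ LongR M h i)

lemma sum_potDiff_le {M : ℕ} {h : ℕ → ℤ} (hb : IsBridge M h) :
    ∑ i ∈ (Finset.range (M - 1)).filter (Active M h),
      (potDiff M h i + (if Relevant h i ∧ ¬ (LongL h i ∧ LongR M h i) then 1 else 0)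
        - (if LongL h i ∧ LongR M h i then 4 * (M : ℤ) else 0)) ≤ 0 := by
  have h1 := sum_riseMove_le hb
  have h2 := sum_descentMove_le hb
  rw [Finset.sum_filter]
  refine le_trans (Finset.sum_le_sum fun i hi => ?_)
    (le_of_eq_of_le Finset.sum_add_distrib (add_nonpos h1 h2))
  have hiM : i + 1 < M := by
    have := Finset.mem_range.1 hi
    omega
  have hle := hb.le (i := i + 1) (by omega)
  push_cast at hle
  by_cases hl : LongL h i <;> by_cases hr : LongR M h i <;> by_cases hp : IsPeak h i
  all_goals
    first
    | have hv : ¬ IsValley h i := fun hv => by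
        have := hv.1
        have := hp.1
        omega
      by_cases hh : 1 ≤ h (i + 1)
      · have := potDiff_peak hiM hp hh (by omega)
        simp [Active, RiseMove, DescentMove, Relevant, hl, hr, hp, hv, hh]
        try omega
      · have := potDiff_peak_eq_zero hiM hp (by omega)
        simp [Active, RiseMove, DescentMove, Relevant, hl, hr, hp, hv, hh]
        try omega
    | by_cases hv : IsValley h i
      · by_cases hh : -1 ≤ h (i + 1)
        · have := potDiff_valley hiM hv hh (by have := hb.le (i := i) (by omega); have := hv.1; omega)
          simp [Active, RiseMove, DescentMove, Relevant, hl, hr, hp, hv, hh]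
          try omega
        · have := potDiff_valley_eq_zero hiM hv (by omega)
          simp [Active, RiseMove, DescentMove, Relevant, hl, hr, hp, hv, hh]
          try omega
      · simp [Active, RiseMove, DescentMove, hl, hr, hp, hv]

/-! ### The two-sided potential -/

/-- The number of mismatches of the word described by the path `h` of length `M`. -/
noncomputable def pathMismatches (M : ℕ) (h : ℕ → ℤ) : ℤ :=
  ∑ j ∈ Finset.range (M - 1), if h j ≠ h (j + 2) then 1 else 0

/-- The Lyapunov function of the cooling process. -/
noncomputable def lyapunov (M : ℕ) (h : ℕ → ℤ) : ℤ :=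
  pot M h + pot M (-h) + (8 * M + 1) * pathMismatches M h

lemma reflectAt_neg (h : ℕ → ℤ) (i : ℕ) : reflectAt (-h) i = -reflectAt h i := by
  funext j
  simp only [reflectAt_apply, Pi.neg_apply]
  split_ifs <;> ring

lemma isPeak_neg {h : ℕ → ℤ} {i : ℕ} : IsPeak (-h) i ↔ IsValley h i := by
  simp only [IsPeak, IsValley, Pi.neg_apply]
  omega

lemma isValley_neg {h : ℕ → ℤ} {i : ℕ} : IsValley (-h) i ↔ IsPeak h i := by
  simp only [IsPeak, IsValley, Pi.neg_apply]
  omega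

lemma longL_neg {h : ℕ → ℤ} {i : ℕ} : LongL (-h) i ↔ LongL h i := by
  simp [LongL]

lemma longR_neg {M : ℕ} {h : ℕ → ℤ} {i : ℕ} : LongR M (-h) i ↔ LongR M h i := by
  simp [LongR]

lemma active_neg {M : ℕ} {h : ℕ → ℤ} {i : ℕ} : Active M (-h) i ↔ Active M h i := by
  rw [Active, Active, isPeak_neg, isValley_neg, longL_neg, longR_neg, or_comm (a := IsValley h i)]

lemma relevant_or_relevant_neg {h : ℕ → ℤ} {i : ℕ} (he : IsPeak h i ∨ IsValley h i) :
    Relevant h i ∨ Relevant (-h) i := by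
  simp only [Relevant, isPeak_neg, isValley_neg, Pi.neg_apply]
  rcases he with he | he
  · by_cases h1 : 1 ≤ h (i + 1)
    · exact Or.inl (Or.inl ⟨he, h1⟩)
    · exact Or.inr (Or.inr ⟨he, by omega⟩)
  · by_cases h1 : -1 ≤ h (i + 1)
    · exact Or.inl (Or.inr ⟨he, h1⟩)
    · exact Or.inr (Or.inl ⟨he, by omega⟩)

lemma pathMismatches_reflectAt {M : ℕ} {h : ℕ → ℤ} (hb : IsBridge M h) {i : ℕ} (hi : i + 1 < M)
    (he : h i = h (i + 2)) :
    pathMismatches M (reflectAt h i) - pathMismatches M h =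
      (if 1 ≤ i then (if LongL h i then -1 else 1) else 0) +
      (if i + 2 < M then (if LongR M h i then -1 else 1) else 0) := by
  have hpoint : ∀ j ∈ Finset.range (M - 1),
      ((if reflectAt h i j ≠ reflectAt h i (j + 2) then 1 else 0) -
        (if h j ≠ h (j + 2) then 1 else 0) : ℤ) =
      (if j + 1 = i then (if LongL h i then -1 else 1) else 0) +
      (if j = i + 1 then (if LongR M h i then -1 else 1) else 0) := by
    intro j hj
    have hj' : j + 1 < M := by
      have := Finset.mem_range.1 hj
      omega
    have s1 := hb.2.2 j (by omega)
    have s2 := hb.2.2 (j + 1) hj'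
    simp only [reflectAt_apply]
    by_cases hji : j + 1 = i
    · subst hji
      have s3 := hb.2.2 (j + 2) (by omega)
      simp only [LongL]
      simp
      simp only [Nat.add_assoc, Nat.reduceAdd] at s1 s2 s3 he ⊢
      split_ifs <;> omega
    · by_cases hji' : j = i + 1
      · subst hji'
        have s3 := hb.2.2 i (by omega)
        simp only [LongR]
        simp [show i + 2 < M by omega]
        simp only [Nat.add_assoc, Nat.reduceAdd] at s1 s2 s3 he ⊢
        split_ifs <;> omega
      · rw [if_neg hji', if_neg (show j + 2 ≠ i + 1 by omega), if_neg hji, if_neg hji']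
        simp
  unfold pathMismatches
  rw [← Finset.sum_sub_distrib, Finset.sum_congr rfl hpoint, Finset.sum_add_distrib]
  congr 1
  · rcases i with _ | k
    · simp
    · simp only [Nat.add_right_cancel_iff]
      rw [Finset.sum_ite_eq', if_pos (Finset.mem_range.2 (show k < M - 1 by omega)),
        if_pos (show 1 ≤ k + 1 by omega)]
  · rw [Finset.sum_ite_eq']
    simp only [Finset.mem_range, show (i + 1 < M - 1) = (i + 2 < M) by simp; omega]

lemma lyapunov_drift {M : ℕ} {h : ℕ → ℤ} (hb : IsBridge M h) :
    ∑ i ∈ (Finset.range (M - 1)).filter (Active M h), (lyapunov M (reflectAt h i) + 1) ≤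
      ((Finset.range (M - 1)).filter (Active M h)).card • lyapunov M h := by
  have h1 := sum_potDiff_le hb
  have h2 := sum_potDiff_le hb.neg
  have hA : (Finset.range (M - 1)).filter (Active M (-h)) =
      (Finset.range (M - 1)).filter (Active M h) :=
    Finset.filter_congr fun _ _ => active_neg
  rw [hA] at h2
  rw [← Finset.sum_const, ← sub_nonpos, ← Finset.sum_sub_distrib]
  refine le_trans (Finset.sum_le_sum fun i hi => ?_)
    (le_of_eq_of_le Finset.sum_add_distrib (add_nonpos h1 h2))
  obtain ⟨hi, he, hlong⟩ := Finset.mem_filter.1 hi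
  have hiM : i + 1 < M := by
    have := Finset.mem_range.1 hi
    omega
  have heq : h i = h (i + 2) := by
    rcases he with he | he
    · rw [he.1, he.2]
    · rw [he.1, he.2]
  have hE := pathMismatches_reflectAt hb hiM heq
  have hrel := relevant_or_relevant_neg he
  have hL : LongL h i → 1 ≤ i := fun h => h.1
  have hR : LongR M h i → i + 2 < M := fun h => h.1
  simp only [longL_neg, longR_neg, potDiff, reflectAt_neg, lyapunov]
  generalize pathMismatches M (reflectAt h i) = E' at *
  generalize pathMismatches M h = E at *
  by_cases hboth : LongL h i ∧ LongR M h i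
  · have e : E' = E - 2 := by
      rw [if_pos (hL hboth.1), if_pos (hR hboth.2), if_pos hboth.1, if_pos hboth.2] at hE
      omega
    subst e
    simp only [hboth, not_true_eq_false, and_false, if_false, and_self, if_true]
    linarith
  · have e : E' ≤ E := by
      split_ifs at hE <;> first | omega | tauto
    have e' : (8 * (M : ℤ) + 1) * E' ≤ (8 * M + 1) * E :=
      mul_le_mul_of_nonneg_left e (by positivity)
    simp only [hboth, not_false_eq_true, and_true, if_false]
    rcases hrel with hr | hr
    · rw [if_pos hr]
      split_ifs <;> linarith
    · rw [if_pos hr]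
      split_ifs <;> linarith

lemma pot_nonneg (M : ℕ) (h : ℕ → ℤ) : 0 ≤ pot M h := by
  refine Finset.sum_nonneg fun c _ => ?_
  have h1 : (levelSet M h c).card ≤ M :=
    (Finset.card_filter_le _ _).trans (Finset.card_range M).le
  have h2 : (intervals (levelSet M h c)).card ≤ (levelSet M h c).card * (levelSet M h c).card :=
    (Finset.card_filter_le _ _).trans (Finset.card_product _ _).le
  have h3 : (intervals (levelSet M h c)).card ≤ 2 * M * (levelSet M h c).card := by
    refine h2.trans (Nat.mul_le_mul_right _ (by omega))
  have h4 : ((intervals (levelSet M h c)).card : ℤ) ≤ 2 * M * (levelSet M h c).card := by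
    exact_mod_cast h3
  omega

lemma pot_le {M : ℕ} {h : ℕ → ℤ} (hb : IsBridge M h) :
    pot M h ≤ 2 * M * ∑ x ∈ Finset.range M, (|h x| + 1) := by
  have h1 : pot M h ≤ ∑ c ∈ Finset.Icc (1 : ℤ) (M + 1), 2 * M * ((levelSet M h c).card : ℤ) :=
    Finset.sum_le_sum fun c _ => by
      have : (0 : ℤ) ≤ (intervals (levelSet M h c)).card := by positivity
      omega
  refine h1.trans ?_
  rw [← Finset.mul_sum]
  refine mul_le_mul_of_nonneg_left ?_ (by positivity)
  have h2 : ∀ c, ((levelSet M h c).card : ℤ) =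
      ∑ x ∈ Finset.range M, if c ≤ max (h x) (h (x + 1)) then 1 else 0 := by
    intro c
    rw [levelSet, Finset.card_filter]
    push_cast
    rfl
  simp only [h2]
  rw [Finset.sum_comm]
  refine Finset.sum_le_sum fun x hx => ?_
  have hx' := hb.2.2 x (Finset.mem_range.1 hx)
  have h3 : (Finset.Icc (1 : ℤ) (M + 1)).filter (fun c => c ≤ max (h x) (h (x + 1))) ⊆
      Finset.Icc 1 (|h x| + 1) := by
    intro c hc
    simp only [Finset.mem_filter, Finset.mem_Icc] at hc ⊢
    have := le_abs_self (h x)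
    exact ⟨hc.1.1, by omega⟩
  have h4 := Finset.card_le_card h3
  rw [Int.card_Icc] at h4
  have h5 := Finset.card_filter (fun c => c ≤ max (h x) (h (x + 1))) (Finset.Icc (1 : ℤ) (M + 1))
  have h6 : ∑ c ∈ Finset.Icc (1 : ℤ) (M + 1),
      (if c ≤ max (h x) (h (x + 1)) then (1 : ℤ) else 0) =
      (((Finset.Icc (1 : ℤ) (M + 1)).filter (fun c => c ≤ max (h x) (h (x + 1)))).card : ℤ) := by
    rw [h5]
    push_cast
    rfl
  rw [h6]
  have := abs_nonneg (h x)
  omega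

lemma pathMismatches_nonneg (M : ℕ) (h : ℕ → ℤ) : 0 ≤ pathMismatches M h :=
  Finset.sum_nonneg fun _ _ => by split_ifs <;> simp

lemma pathMismatches_le (M : ℕ) (h : ℕ → ℤ) : pathMismatches M h ≤ M := by
  refine (Finset.sum_le_card_nsmul _ _ 1 fun _ _ => by split_ifs <;> simp).trans ?_
  simp

lemma lyapunov_nonneg (M : ℕ) (h : ℕ → ℤ) : 0 ≤ lyapunov M h := by
  have h1 := pot_nonneg M h
  have h2 := pot_nonneg M (-h)
  have h3 := pathMismatches_nonneg M h
  unfold lyapunov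
  positivity

lemma lyapunov_le {M : ℕ} {h : ℕ → ℤ} (hb : IsBridge M h) :
    lyapunov M h ≤ 4 * M * ∑ x ∈ Finset.range M, |h x| + 13 * M ^ 2 := by
  have h1 := pot_le hb
  have h2 := pot_le hb.neg
  simp only [Pi.neg_apply, abs_neg] at h2
  have h3 : (8 * (M : ℤ) + 1) * pathMismatches M h ≤ (8 * M + 1) * M :=
    mul_le_mul_of_nonneg_left (pathMismatches_le M h) (by positivity)
  have h4 : (M : ℤ) ≤ M ^ 2 := by exact_mod_cast Nat.le_self_pow two_ne_zero M
  rw [Finset.sum_add_distrib] at h1 h2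
  simp only [Finset.sum_const, Finset.card_range, nsmul_eq_mul, mul_one] at h1 h2
  unfold lyapunov
  nlinarith

/-! ### The path of a word -/

/-- The height difference contributed by an optional letter. -/
def stepHeight : Option Bool → ℤ
  | none => 0
  | some true => 1
  | some false => -1

lemma height_succ (w : Word) (s : ℕ) : height w (s + 1) = height w s + stepHeight w[s]? := by
  unfold height
  rw [List.take_add_one, List.count_append, List.count_append]
  rcases w[s]? with _ | _ | _ <;> simp [stepHeight] <;> ring

lemma height_zero (w : Word) : height w 0 = 0 := by simp [height]

lemma height_flip {w : Word} {i : ℕ} (hi : i + 1 < w.length) :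
    height (flip w i) = reflectAt (height w) i := by
  have hget : ∀ s, (flip w i)[s]? =
      if s = i then w[i + 1]? else if s = i + 1 then w[i]? else w[s]? := by
    intro s
    have e0 : w[i]? = some (w.getD i true) := by
      simp [List.getElem?_eq_getElem (show i < w.length by omega)]
    have e1 : w[i + 1]? = some (w.getD (i + 1) true) := by
      simp [List.getElem?_eq_getElem hi]
    rw [flip, List.getElem?_set, List.getElem?_set, List.length_set, e0, e1]
    split_ifs <;> first | omega | rfl
  funext s
  induction s with
  | zero => simp [reflectAt_apply, height_zero]
  | succ s ih =>
    rw [height_succ, ih, hget]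
    simp only [reflectAt_apply]
    by_cases h1 : s = i
    · subst h1
      simp [height_succ]
      ring
    · by_cases h2 : s = i + 1
      · subst h2
        simp [height_succ]
      · simp [h1, h2, height_succ]

lemma length_flip (w : Word) (i : ℕ) : (flip w i).length = w.length := by simp [flip]

lemma stepHeight_eq {w : Word} {s : ℕ} (hs : s < w.length) :
    stepHeight w[s]? = if w.getD s true = true then 1 else -1 := by
  simp only [List.getD_eq_getElem?_getD, List.getElem?_eq_getElem hs, Option.getD_some]
  rcases w[s] <;> simp [stepHeight]

lemma getD_eq_iff {w : Word} {i : ℕ} (hi : i + 1 < w.length) :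
    w.getD i true = w.getD (i + 1) true ↔ height w i ≠ height w (i + 2) := by
  rw [height_succ w (i + 1), height_succ w i, stepHeight_eq hi,
    stepHeight_eq (show i < w.length by omega)]
  rcases w.getD i true <;> rcases w.getD (i + 1) true <;> simp [add_assoc]

lemma mismatches_eq (w : Word) :
    (mismatches w : ℤ) = pathMismatches w.length (height w) := by
  have h1 : ∀ w : Word, (mismatches w : ℤ) = ∑ j ∈ Finset.range (w.length - 1),
      if w.getD j true = w.getD (j + 1) true then 1 else 0 := by
    intro w
    induction w with
    | nil => simp [mismatches]
    | cons a l ih =>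
      rcases l with _ | ⟨b, l⟩
      · simp [mismatches]
      · have e : mismatches (a :: b :: l) = mismatches (b :: l) + if a = b then 1 else 0 := by
          simp [mismatches, List.countP_cons]
        rw [e]
        push_cast
        rw [ih]
        simp only [List.length_cons, Nat.add_sub_cancel]
        rw [Finset.sum_range_succ']
        simp
  rw [h1, pathMismatches]
  refine Finset.sum_congr rfl fun j hj => ?_
  have := Finset.mem_range.1 hj
  simp only [getD_eq_iff (show j + 1 < w.length by omega)]

lemma isBridge_height {w : Word} (hw : height w w.length = 0) :
    IsBridge w.length (height w) := by
  refine ⟨height_zero w, hw, fun i hi => ?_⟩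
  rw [height_succ, stepHeight_eq hi]
  split_ifs
  · exact Or.inl rfl
  · exact Or.inr (by ring)

lemma IsBridge.isPeak_or_isValley_iff {M : ℕ} {h : ℕ → ℤ} (hb : IsBridge M h) {i : ℕ}
    (hi : i + 1 < M) : IsPeak h i ∨ IsValley h i ↔ h i = h (i + 2) := by
  have h1 := hb.2.2 i (by omega)
  have h2 := hb.2.2 (i + 1) hi
  rw [show i + 1 + 1 = i + 2 from rfl] at h2
  unfold IsPeak IsValley
  omega

lemma allowedFlips_eq {w : Word} (hw : height w w.length = 0) (hlen : 3 ≤ w.length) :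
    allowedFlips w = (Finset.range (w.length - 1)).filter (Active w.length (height w)) := by
  have hb := isBridge_height hw
  ext i
  rw [allowedFlips, Finset.mem_filter, Finset.mem_filter, Finset.mem_range, Finset.mem_range,
    CanFlip]
  by_cases hi : i + 1 < w.length
  · have h1 := getD_eq_iff hi
    have h2 := hb.isPeak_or_isValley_iff hi
    by_cases he : height w i = height w (i + 2)
    · have h3 := pathMismatches_reflectAt hb hi he
      rw [← height_flip hi, ← mismatches_eq, ← length_flip w i, ← mismatches_eq] at h3
      rw [length_flip] at h3
      have hL : LongL (height w) i → 1 ≤ i := fun h => h.1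
      have hR : LongR w.length (height w) i → i + 2 < w.length := fun h => h.1
      have h4 : mismatches (flip w i) ≤ mismatches w ↔
          LongL (height w) i ∨ LongR w.length (height w) i := by
        split_ifs at h3 with a b c d e f g
        all_goals first
          | exact ⟨fun _ => by tauto, fun _ => by omega⟩
          | exact ⟨fun _ => by omega, fun _ => by tauto⟩
      simp only [Active, h2, h4, he, hi, true_and]
      constructor
      · exact fun h => ⟨by omega, h.2.2⟩
      · exact fun h => ⟨by omega, fun h' => h1.1 h' he, h.2⟩
    · simp only [Active, h2, he, false_and, and_false, iff_false]
      exact fun h => h.2.1.2 (h1.2 he)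
  · exact ⟨fun h => absurd h.2.1.1 hi, fun h => by omega⟩

lemma IsBridge.exists_active {M : ℕ} {h : ℕ → ℤ} (hb : IsBridge M h)
    (hne : pathMismatches M h ≠ 0) :
    ((Finset.range (M - 1)).filter (Active M h)).Nonempty := by
  obtain ⟨j, hj, hjne⟩ : ∃ j, j + 1 < M ∧ h j ≠ h (j + 2) := by
    obtain ⟨j, hj, hj'⟩ := Finset.exists_ne_zero_of_sum_ne_zero hne
    exact ⟨j, by have := Finset.mem_range.1 hj; omega, fun e => hj' (if_neg (not_not.2 e))⟩
  by_contra hA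
  have hno : ∀ i, i + 1 < M → h i = h (i + 2) → ¬ (LongL h i ∨ LongR M h i) := by
    intro i hi he hl
    refine hA ⟨i, Finset.mem_filter.2 ⟨Finset.mem_range.2 (by omega), ?_, hl⟩⟩
    exact (hb.isPeak_or_isValley_iff hi).2 he
  have hiff : ∀ k, k + 2 < M → (h k ≠ h (k + 2) ↔ h (k + 1) ≠ h (k + 3)) := by
    intro k hk
    constructor
    · intro h1 h2
      exact hno (k + 1) (by omega) h2 (Or.inl ⟨by omega, h1⟩)
    · intro h1 h2
      exact hno k (by omega) h2 (Or.inr ⟨hk, h1⟩)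
  have hzero : ∀ k, k + 1 < M → (h k ≠ h (k + 2) ↔ h 0 ≠ h 2) := by
    intro k
    induction k with
    | zero => simp
    | succ k ih =>
      intro hk
      rw [← ih (by omega), hiff k hk]
  have hall : ∀ k, k + 1 < M → h k ≠ h (k + 2) := fun k hk =>
    (hzero k hk).2 ((hzero j hj).1 hjne)
  have hstep : ∀ k, k < M → h (k + 1) - h k = h 1 := by
    intro k
    induction k with
    | zero => simp [hb.1]
    | succ k ih =>
      intro hk
      have h1 := ih (by omega)
      have h2 := hall k hk
      have h3 := hb.2.2 k (by omega)
      have h4 := hb.2.2 (k + 1) hk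
      rw [show k + 1 + 1 = k + 2 from rfl] at h4 ⊢
      omega
  have hlin : ∀ k, k ≤ M → h k = k * h 1 := by
    intro k
    induction k with
    | zero => simp [hb.1]
    | succ k ih =>
      intro hk
      have h1 := hstep k hk
      have h2 := ih (by omega)
      push_cast
      linarith
  have h1 := hlin M le_rfl
  rw [hb.2.1] at h1
  have h2 := hb.2.2 0 (by omega)
  rw [hb.1, zero_add] at h2
  rcases h2 with h2 | h2 <;> rw [h2] at h1 <;> omega

/-! ### The expected convergence time -/

/-- The bound for the expected convergence time provided by the potential; it is infinite on
words that are not balanced or too short. -/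
noncomputable def timeBound (w : Word) : ℝ≥0∞ :=
  if height w w.length = 0 ∧ 3 ≤ w.length then
    ((lyapunov w.length (height w)).toNat : ℝ≥0∞)
  else ⊤

lemma tsum_bind_mul {α β : Type*} (p : PMF α) (f : α → PMF β) (g : β → ℝ≥0∞) :
    ∑' b, p.bind f b * g b = ∑' a, p a * ∑' b, f a b * g b := by
  simp only [PMF.bind_apply, ← ENNReal.tsum_mul_right, ← ENNReal.tsum_mul_left, mul_assoc]
  exact ENNReal.tsum_comm

lemma tsum_pure_mul {α : Type*} (a : α) (g : α → ℝ≥0∞) :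
    ∑' b, PMF.pure a b * g b = g a := by
  rw [tsum_eq_single a fun b hb => by simp [PMF.pure_apply, hb]]
  simp

lemma tsum_map_uniformOfFinset_mul {α β : Type*} (s : Finset α) (hs : s.Nonempty) (f : α → β)
    (g : β → ℝ≥0∞) :
    ∑' b, (PMF.uniformOfFinset s hs).map f b * g b =
      (s.card : ℝ≥0∞)⁻¹ * ∑ a ∈ s, g (f a) := by
  rw [← PMF.bind_pure_comp, tsum_bind_mul]
  simp only [Function.comp, tsum_pure_mul]
  rw [tsum_eq_sum (s := s) fun a ha => by
    rw [PMF.uniformOfFinset_apply_of_notMem hs ha, zero_mul], Finset.mul_sum]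
  exact Finset.sum_congr rfl fun a ha => by rw [PMF.uniformOfFinset_apply_of_mem hs ha]

lemma tsum_coolStep_mul_timeBound_le (v : Word) :
    ∑' u, coolStep v u * timeBound u + (if mismatches v ≠ 0 then 1 else 0) ≤ timeBound v := by
  by_cases hv : height v v.length = 0 ∧ 3 ≤ v.length
  swap
  · rw [timeBound, if_neg hv]
    exact le_top
  by_cases hm : mismatches v = 0
  · rw [coolStep, dif_neg (fun h => h.1 hm), tsum_pure_mul, if_neg (not_not.2 hm), add_zero]
  have hb := isBridge_height hv.1
  have hne : (allowedFlips v).Nonempty := by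
    rw [allowedFlips_eq hv.1 hv.2]
    refine hb.exists_active ?_
    rw [← mismatches_eq]
    exact_mod_cast hm
  have hflip : ∀ i ∈ allowedFlips v, timeBound (flip v i) =
      ((lyapunov v.length (reflectAt (height v) i)).toNat : ℝ≥0∞) := by
    intro i hi
    have hi' := (Finset.mem_filter.1 hi).2.1.1
    have h0 : reflectAt (height v) i v.length = 0 := by
      rw [reflectAt_apply, if_neg (by omega), hv.1]
    rw [timeBound, length_flip, height_flip hi', if_pos ⟨h0, hv.2⟩]
  have hdrift := lyapunov_drift hb
  rw [← allowedFlips_eq hv.1 hv.2, nsmul_eq_mul] at hdrift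
  have hnat : ∑ i ∈ allowedFlips v, ((lyapunov v.length (reflectAt (height v) i)).toNat + 1) ≤
      (allowedFlips v).card * (lyapunov v.length (height v)).toNat := by
    zify
    simpa only [Int.toNat_of_nonneg (lyapunov_nonneg _ _)] using hdrift
  have hcard : ((allowedFlips v).card : ℝ≥0∞) ≠ 0 := by
    exact_mod_cast hne.card_pos.ne'
  rw [coolStep, dif_pos ⟨hm, hne⟩, tsum_map_uniformOfFinset_mul, if_pos hm,
    Finset.sum_congr rfl hflip, timeBound, if_pos hv,
    ← ENNReal.inv_mul_cancel hcard (ENNReal.natCast_ne_top _), ← mul_add]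
  rw [ENNReal.inv_mul_le_iff hcard (ENNReal.natCast_ne_top _)]
  rw [Finset.sum_add_distrib, Finset.sum_const, smul_eq_mul, mul_one] at hnat
  exact_mod_cast hnat

lemma expConvTime_le_timeBound (w : Word) : expConvTime w ≤ timeBound w := by
  refine ENNReal.tsum_le_of_sum_range_le fun t => ?_
  suffices h : ∑' v, coolDist w t v * timeBound v + ∑ i ∈ Finset.range t,
      (coolDist w i).toOuterMeasure {v | mismatches v ≠ 0} ≤ timeBound w from
    le_add_self.trans h
  induction t with
  | zero => simp [coolDist]
  | succ t ih =>
    refine le_trans ?_ ih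
    rw [Finset.sum_range_succ, add_comm (∑ i ∈ Finset.range t, _), ← add_assoc]
    refine add_le_add_left ?_ _
    rw [coolDist, tsum_bind_mul, PMF.toOuterMeasure_apply, ← ENNReal.tsum_add]
    refine ENNReal.tsum_le_tsum fun v => ?_
    refine le_trans (le_of_eq ?_) (mul_le_mul_right (tsum_coolStep_mul_timeBound_le v) _)
    rw [mul_add, Set.indicator_apply]
    by_cases hm : mismatches v = 0 <;> simp [hm]

/-! ### Averaging over balanced words -/

/-- The sign of a letter. -/
def sign (b : Bool) : ℤ := if b = true then 1 else -1

lemma sign_mul_self (b : Bool) : sign b * sign b = 1 := by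
  rcases b <;> simp [sign]

/-- The families of letters with as many `true` as `false`. -/
noncomputable def balanced (ι : Type*) [Fintype ι] : Finset (ι → Bool) :=
  Finset.univ.filter fun f => ∑ i, sign (f i) = 0

lemma sum_sign_mul_sign_eq {ι : Type*} [Fintype ι] {i j k : ι} (hj : j ≠ i) (hk : k ≠ i) :
    ∑ f ∈ balanced ι, sign (f i) * sign (f j) = ∑ f ∈ balanced ι, sign (f i) * sign (f k) := by
  refine Finset.sum_equiv ((Equiv.swap j k).arrowCongr (Equiv.refl Bool)) (fun f => ?_) ?_
  · simp only [balanced, Finset.mem_filter, Finset.mem_univ, true_and, Equiv.arrowCongr_apply,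
      Equiv.coe_refl, Function.comp, id, Equiv.symm_swap]
    rw [Equiv.sum_comp (Equiv.swap j k) fun x => sign (f x)]
  · intro f _
    simp [Equiv.swap_apply_of_ne_of_ne hj.symm hk.symm]

lemma sum_sign_mul_sign_nonpos {ι : Type*} [Fintype ι] {i j : ι} (hj : j ≠ i) :
    ∑ f ∈ balanced ι, sign (f i) * sign (f j) ≤ 0 := by
  have h1 : ∑ k, ∑ f ∈ balanced ι, sign (f i) * sign (f k) = 0 := by
    rw [Finset.sum_comm]
    refine Finset.sum_eq_zero fun f hf => ?_
    rw [← Finset.mul_sum, (Finset.mem_filter.1 hf).2, mul_zero]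
  rw [← Finset.add_sum_erase _ _ (Finset.mem_univ i), Finset.sum_congr rfl fun k hk =>
    sum_sign_mul_sign_eq (Finset.ne_of_mem_erase hk) hj, Finset.sum_const, nsmul_eq_mul] at h1
  have h2 : 0 ≤ ∑ f ∈ balanced ι, sign (f i) * sign (f i) :=
    Finset.sum_nonneg fun f _ => mul_self_nonneg _
  have h3 : 0 < ((Finset.univ.erase i).card : ℤ) := by
    exact_mod_cast Finset.card_pos.2 ⟨j, Finset.mem_erase.2 ⟨hj, Finset.mem_univ j⟩⟩
  by_contra! h4
  have := mul_pos h3 h4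
  omega

lemma sum_sq_sum_sign_le {ι : Type*} [Fintype ι] (s : Finset ι) :
    ∑ f ∈ balanced ι, (∑ i ∈ s, sign (f i)) ^ 2 ≤ s.card * (balanced ι).card := by
  have h1 : ∑ f ∈ balanced ι, (∑ i ∈ s, sign (f i)) ^ 2 =
      ∑ i ∈ s, ∑ j ∈ s, ∑ f ∈ balanced ι, sign (f i) * sign (f j) := by
    simp only [sq, Finset.sum_mul_sum]
    rw [Finset.sum_comm]
    exact Finset.sum_congr rfl fun i _ => Finset.sum_comm
  rw [h1, ← nsmul_eq_mul]
  refine Finset.sum_le_card_nsmul _ _ _ fun i hi => ?_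
  rw [← Finset.add_sum_erase _ _ hi]
  have h2 : ∑ f ∈ balanced ι, sign (f i) * sign (f i) = (balanced ι).card := by
    simp [sign_mul_self]
  have h3 := Finset.sum_nonpos fun j (hj : j ∈ s.erase i) =>
    sum_sign_mul_sign_nonpos (Finset.ne_of_mem_erase hj)
  linarith

lemma height_ofFn {m : ℕ} (f : Fin m → Bool) (x : ℕ) :
    height (List.ofFn f) x =
      ∑ i ∈ Finset.univ.filter (fun i : Fin m => (i : ℕ) < x), sign (f i) := by
  induction x with
  | zero => simp [height_zero]
  | succ x ih =>
    rw [height_succ, ih]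
    by_cases hx : x < m
    · have h1 : Finset.univ.filter (fun i : Fin m => (i : ℕ) < x + 1) =
          insert ⟨x, hx⟩ (Finset.univ.filter (fun i : Fin m => (i : ℕ) < x)) := by
        ext i
        simp only [Finset.mem_filter, Finset.mem_univ, true_and, Finset.mem_insert, Fin.ext_iff]
        omega
      rw [h1, Finset.sum_insert (by simp), add_comm, stepHeight_eq (by simpa using hx)]
      simp [sign, hx, List.getD_eq_getElem?_getD]
    · have h1 : Finset.univ.filter (fun i : Fin m => (i : ℕ) < x + 1) =
          Finset.univ.filter (fun i : Fin m => (i : ℕ) < x) := by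
        ext i
        simp only [Finset.mem_filter, Finset.mem_univ, true_and]
        omega
      rw [h1, List.getElem?_eq_none (by simpa using hx), stepHeight, add_zero]

lemma height_length (w : Word) : height w w.length = 2 * w.count true - w.length := by
  have := List.count_true_add_count_false (l := w)
  rw [height, List.take_length]
  omega

lemma configSet_eq_image (n : ℕ) : configSet n = (balanced (Fin (2 * n))).image List.ofFn := by
  rw [configSet, Finset.filter_image]
  congr 1
  ext f
  have h1 := height_length (List.ofFn f)
  rw [height_ofFn, List.length_ofFn, Finset.filter_true_of_mem fun i _ => i.2] at h1
  simp only [balanced, Finset.mem_filter, Finset.mem_univ, true_and, h1]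
  push_cast
  omega

lemma length_of_mem_configSet {n : ℕ} {w : Word} (hw : w ∈ configSet n) : w.length = 2 * n := by
  rw [configSet_eq_image] at hw
  obtain ⟨f, -, rfl⟩ := Finset.mem_image.1 hw
  simp

lemma height_length_of_mem_configSet {n : ℕ} {w : Word} (hw : w ∈ configSet n) :
    height w w.length = 0 := by
  rw [height_length, length_of_mem_configSet hw, (Finset.mem_filter.1 hw).2]
  push_cast
  ring

lemma sum_sq_height_le (n x : ℕ) :
    ∑ w ∈ configSet n, height w x ^ 2 ≤ 2 * n * (configSet n).card := by
  rw [configSet_eq_image, Finset.sum_image fun _ _ _ _ h => List.ofFn_injective h,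
    Finset.card_image_of_injective _ List.ofFn_injective]
  simp only [height_ofFn]
  refine (sum_sq_sum_sign_le _).trans (mul_le_mul_of_nonneg_right ?_ (by positivity))
  have h1 := Finset.card_filter_le Finset.univ fun i : Fin (2 * n) => (i : ℕ) < x
  rw [Finset.card_univ, Fintype.card_fin] at h1
  exact_mod_cast h1

lemma sum_abs_height_le {n : ℕ} (hn : 0 < n) (x : ℕ) :
    ∑ w ∈ configSet n, |(height w x : ℝ)| ≤ √(2 * n) * (configSet n).card := by
  have hs : 0 < √(2 * n : ℝ) := by positivity
  have hs2 : √(2 * n : ℝ) ^ 2 = 2 * n := Real.sq_sqrt (by positivity)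
  have h1 : ∑ w ∈ configSet n, (height w x : ℝ) ^ 2 ≤ 2 * n * (configSet n).card := by
    exact_mod_cast sum_sq_height_le n x
  have h2 : ∑ w ∈ configSet n, 2 * √(2 * n : ℝ) * |(height w x : ℝ)| ≤
      ∑ w ∈ configSet n, (√(2 * n : ℝ) ^ 2 + (height w x : ℝ) ^ 2) := by
    refine Finset.sum_le_sum fun w _ => ?_
    have := two_mul_le_add_sq √(2 * n : ℝ) |(height w x : ℝ)|
    rwa [sq_abs] at this
  rw [← Finset.mul_sum, Finset.sum_add_distrib, Finset.sum_const, nsmul_eq_mul, hs2] at h2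
  refine le_of_mul_le_mul_left ?_ (mul_pos two_pos hs)
  calc 2 * √(2 * n : ℝ) * ∑ w ∈ configSet n, |(height w x : ℝ)|
      ≤ 2 * √(2 * n : ℝ) ^ 2 * (configSet n).card := by rw [hs2]; linarith
    _ = 2 * √(2 * n : ℝ) * (√(2 * n) * (configSet n).card) := by ring

lemma expConvTime_le {n : ℕ} (hn : 2 ≤ n) {w : Word} (hw : w ∈ configSet n) :
    expConvTime w ≤ ENNReal.ofReal
      (8 * n * ∑ x ∈ Finset.range (2 * n), |(height w x : ℝ)| + 52 * n ^ 2) := by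
  refine (expConvTime_le_timeBound w).trans ?_
  have h0 := height_length_of_mem_configSet hw
  have hl := length_of_mem_configSet hw
  have h1 := lyapunov_le (isBridge_height h0)
  have h2 := lyapunov_nonneg w.length (height w)
  rw [timeBound, if_pos ⟨h0, by omega⟩, ← ENNReal.ofReal_natCast]
  refine ENNReal.ofReal_le_ofReal ?_
  rw [hl] at h1 h2 ⊢
  have h3 : (((lyapunov (2 * n) (height w)).toNat : ℤ) : ℝ) ≤
      ((4 * (2 * n : ℕ) * ∑ x ∈ Finset.range (2 * n), |height w x| + 13 * (2 * n : ℕ) ^ 2 : ℤ) :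
        ℝ) := by
    rw [Int.toNat_of_nonneg h2]
    exact_mod_cast h1
  push_cast at h3
  calc _ ≤ _ := h3
    _ = _ := by ring

lemma sum_expConvTime_le {n : ℕ} (hn : 2 ≤ n) :
    ∑ w ∈ configSet n, expConvTime w ≤
      ENNReal.ofReal ((16 * n ^ 2 * √(2 * n) + 52 * n ^ 2) * (configSet n).card) := by
  refine (Finset.sum_le_sum fun w hw => expConvTime_le hn hw).trans ?_
  rw [← ENNReal.ofReal_sum_of_nonneg fun w _ => by positivity]
  refine ENNReal.ofReal_le_ofReal ?_
  rw [Finset.sum_add_distrib, ← Finset.mul_sum, Finset.sum_comm, Finset.sum_const, nsmul_eq_mul]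
  have h1 := Finset.sum_le_card_nsmul (Finset.range (2 * n)) _ _ fun x _ =>
    sum_abs_height_le (show 0 < n by omega) x
  rw [Finset.card_range, nsmul_eq_mul] at h1
  push_cast at h1
  have h2 := mul_le_mul_of_nonneg_left h1 (show (0 : ℝ) ≤ 8 * n by positivity)
  linarith

/-- the uniformly-averaged expected convergence time of the cooling
process is `O(n^{5/2} ln n)`. -/
theorem uniform_average_convergence_time :
    ∃ C : ℝ, 0 < C ∧ ∀ n : ℕ, 2 ≤ n →
      (∑ w ∈ configSet n, expConvTime w) / ((configSet n).card : ℝ≥0∞)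
        ≤ ENNReal.ofReal (C * (n : ℝ) ^ ((5 : ℝ) / 2) * Real.log n) := by
  refine ⟨200, by norm_num, fun n hn => ENNReal.div_le_of_le_mul ?_⟩
  refine (sum_expConvTime_le hn).trans ?_
  rw [← ENNReal.ofReal_natCast, ← ENNReal.ofReal_mul' (by positivity)]
  refine ENNReal.ofReal_le_ofReal (mul_le_mul_of_nonneg_right ?_ (by positivity))
  have hn2 : (2 : ℝ) ≤ n := by exact_mod_cast hn
  have hpow : (n : ℝ) ^ ((5 : ℝ) / 2) = n ^ 2 * √n := by
    rw [show (5 : ℝ) / 2 = (2 : ℕ) + 1 / 2 by norm_num, Real.rpow_add (by positivity),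
      Real.rpow_natCast, Real.sqrt_eq_rpow]
  have hlog : 1 / 2 ≤ Real.log n := by
    have h1 := Real.log_two_gt_d9
    have h2 := Real.log_le_log two_pos hn2
    linarith
  have hs : 1 ≤ √(n : ℝ) := Real.one_le_sqrt.2 (by linarith)
  have hs2 : √(2 * n : ℝ) ≤ 2 * √n := by
    rw [Real.sqrt_le_left (by positivity), mul_pow, Real.sq_sqrt (by positivity)]
    linarith
  rw [hpow]
  have h1 : 16 * (n : ℝ) ^ 2 * √(2 * n) + 52 * n ^ 2 ≤ 200 * (n ^ 2 * √n) * (1 / 2) := by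
    nlinarith [mul_le_mul_of_nonneg_left hs (sq_nonneg (n : ℝ)),
      mul_le_mul_of_nonneg_left hs2 (sq_nonneg (n : ℝ))]
  exact h1.trans (mul_le_mul_of_nonneg_left hlog (by positivity))

end Cooling
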